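/- Olšák's Theorem. A clone C on an arbitrary set A is a Taylor clone if and only if C contains a 6-ary idempotent operation f satisfying the identities f(x,y,y,y,x,x) = f(y,x,y,x,y,x) = f(y,y,x,x,x,y) for all x, y ∈ A. -/

import Mathlib

universe u

/-- The type of finitary operations (of positive arity `n + 1`) on `A`. -/
abbrev Ops (A : Type u) : Type u := Σ n : ℕ, (Fin (n + 1) → A) → A

/-- A set of finitary operations on `A` is a clone if it contains all projection
operations and is closed under composition. -/
def IsClone {A : Type u} (C : Set (Ops A)) : Prop :=
  (∀ (n : ℕ) (i : Fin (n + 1)), (⟨n, fun x => x i⟩ : Ops A) ∈ C) ∧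
  ∀ (n m : ℕ) (f : (Fin (n + 1) → A) → A) (g : Fin (n + 1) → (Fin (m + 1) → A) → A),
    (⟨n, f⟩ : Ops A) ∈ C → (∀ i, (⟨m, g i⟩ : Ops A) ∈ C) →
    (⟨m, fun x => f fun i => g i x⟩ : Ops A) ∈ C

/-- The clone generated by a set `F` of operations: the least clone containing `F`. -/
def cloneGen {A : Type u} (F : Set (Ops A)) : Set (Ops A) :=
  ⋂₀ {C : Set (Ops A) | IsClone C ∧ F ⊆ C}

/-- The clone of all projection operations on `A`. -/
def projClone (A : Type u) : Set (Ops A) :=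
  {f : Ops A | ∃ i : Fin (f.1 + 1), f.2 = fun x => x i}

/-- A clone `M` is maximal if it is a proper subclone of the clone of all operations
and the clone of all operations is the only clone properly containing it. -/
def IsMaximalClone {A : Type u} (M : Set (Ops A)) : Prop :=
  IsClone M ∧ M ≠ Set.univ ∧
    ∀ D : Set (Ops A), IsClone D → M ⊆ D → D = M ∨ D = Set.univ

/-- A clone `C` is minimal if the clone of projections is its unique proper subclone. -/
def IsMinimalClone {A : Type u} (C : Set (Ops A)) : Prop :=
  IsClone C ∧ C ≠ projClone A ∧
    ∀ D : Set (Ops A), IsClone D → D ⊆ C → D = projClone A ∨ D = C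

/-- An `n`-ary operation `f` preserves a `k`-ary relation `ρ` if applying `f`
coordinatewise to tuples from `ρ` always yields a tuple in `ρ`. -/
def Preserves {A : Type u} {n k : ℕ} (f : (Fin n → A) → A) (ρ : Set (Fin k → A)) : Prop :=
  ∀ t : Fin n → Fin k → A, (∀ i, t i ∈ ρ) → (fun j => f fun i => t i j) ∈ ρ

/-- `Pol ρ` is the clone of all operations preserving the relation `ρ`. -/
def Pol {A : Type u} {k : ℕ} (ρ : Set (Fin k → A)) : Set (Ops A) :=
  {f : Ops A | Preserves f.2 ρ}

/-- A Taylor operation: an idempotent operation `f` of arity `f.1 + 1` such that for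
every coordinate `i` there are tuples `u, v` of indices from a two-element set,
differing at position `i`, with `f (z ∘ u) = f (z ∘ v)` for all `z`. -/
def IsTaylor {A : Type u} (f : Ops A) : Prop :=
  (∀ a : A, f.2 (fun _ => a) = a) ∧
  ∀ i : Fin (f.1 + 1), ∃ u v : Fin (f.1 + 1) → Fin 2, u i ≠ v i ∧
    ∀ z : Fin 2 → A, f.2 (fun j => z (u j)) = f.2 (fun j => z (v j))

/-- Replace the entries of `a` at positions below `k` by `c`. -/
def mixBelow {B : Type*} {n : ℕ} (c : B) (k : Fin (n + 1)) (a : Fin (n + 1) → B) :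
    Fin (n + 1) → B :=
  fun l => if l < k then c else a l

theorem rel_mixBelow {B : Type*} {n : ℕ} {t : (Fin (n + 1) → B) → B} {R : B → B → B → Prop}
    (hR : ∀ p q r : Fin (n + 1) → B, (∀ l, R (p l) (q l) (r l)) → R (t p) (t q) (t r))
    {c₁ c₂ c₃ : B} {p q r : Fin (n + 1) → B} (k : Fin (n + 1)) (hc : R c₁ c₂ c₃)
    (h : ∀ l, R (p l) (q l) (r l)) :
    R (t (mixBelow c₁ k p)) (t (mixBelow c₂ k q)) (t (mixBelow c₃ k r)) := by
  refine hR _ _ _ fun l => ?_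
  unfold mixBelow
  split_ifs
  exacts [hc, h l]

section Walks

variable {B : Type*} {n : ℕ} {t : (Fin (n + 1) → B) → B} {R : B → B → B → Prop}

theorem rel_mixBelow_of_const (ht : ∀ b, t (fun _ => b) = b)
    (hR : ∀ p q r : Fin (n + 1) → B, (∀ l, R (p l) (q l) (r l)) → R (t p) (t q) (t r))
    {c c₂ c₃ : B} {q r : Fin (n + 1) → B} (k : Fin (n + 1)) (hc : R c c₂ c₃)
    (h : ∀ l, R c (q l) (r l)) : R c (t (mixBelow c₂ k q)) (t (mixBelow c₃ k r)) := by
  have := rel_mixBelow hR (p := fun _ => c) k hc h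
  have e : mixBelow c k (fun _ => c) = fun _ => c := by
    funext l; simp [mixBelow]
  rwa [e, ht] at this

/-- If all coordinates of three consecutive states `p, q, r` form walks in `R` and the inputs below
the diagonal alternate between `x` and `y`, then feeding the first coordinate into all inputs below
the diagonal makes all coordinates equal after finitely many steps, which yields a constant triple
in `R`. -/
theorem exists_const_of_triangular (ht : ∀ b, t (fun _ => b) = b)
    (hR : ∀ p q r : Fin (n + 1) → B, (∀ l, R (p l) (q l) (r l)) → R (t p) (t q) (t r))
    {x y : B} {p q r : Fin (n + 1) → B}
    (hq : ∀ k, q k = t (mixBelow x k p)) (hr : ∀ k, r k = t (mixBelow y k q))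
    (hpqr : ∀ k, R (p k) (q k) (r k)) (hxy : R x y (r 0)) (hy : R y (r 0) (t r)) :
    ∃ e, R e e e := by
  let next : (Fin (n + 1) → B) → Fin (n + 1) → B := fun a k => t (mixBelow (a 0) k a)
  let s : ℕ → Fin (n + 1) → B := fun m => next^[m] r
  have hs : ∀ m k, s (m + 1) k = t (mixBelow (s m 0) k (s m)) := fun m k => by
    simp only [s, Function.iterate_succ_apply', next]
  have mix0 : ∀ (c : B) (a : Fin (n + 1) → B), mixBelow c 0 a = a := fun c a => by
    funext l; simp [mixBelow]
  have hs0 : s 0 = r := rfl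
  have h1 : s 1 0 = t r := by rw [hs, mix0, hs0]
  have hbase : ∀ k, R (q k) (r k) (s 1 k) := fun k => by
    rw [hq, hr, hs, hs0]; exact rel_mixBelow hR k hxy hpqr
  have hwalk : ∀ m k, R (s m k) (s (m + 1) k) (s (m + 2) k) := by
    intro m
    induction m with
    | zero =>
      intro k
      have h2 : s (0 + 1) k = t (mixBelow (r 0) k r) := by rw [hs, hs0]
      rw [hs (0 + 1) k, h2, hs0, hr]
      refine rel_mixBelow hR k ?_ hbase
      rw [zero_add, h1]; exact hy
    | succ m ih =>
      intro k
      rw [hs m, hs (m + 1), hs (m + 2)]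
      exact rel_mixBelow hR k (ih 0) ih
  have hsync : ∀ m (k : Fin (n + 1)), k.val ≤ m → s m k = s m 0 := by
    intro m
    induction m with
    | zero =>
      intro k hk
      have : k = 0 := Fin.ext (by simpa using hk)
      rw [this]
    | succ m ih =>
      intro k hk
      rw [hs, hs, mix0]
      congr 1
      funext l
      unfold mixBelow
      split_ifs with h
      · exact (ih l (by have := Fin.lt_def.1 h; omega)).symm
      · rfl
  have hconst : ∀ m, n ≤ m → s m = fun _ => s m 0 := fun m hm => by
    funext k; exact hsync m k (by have := k.isLt; omega)
  have hstep : ∀ m, n ≤ m → s (m + 1) 0 = s m 0 := fun m hm => by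
    rw [hs, mix0, hconst m hm, ht]
  have := hwalk n 0
  rw [hstep (n + 1) (by omega), hstep n le_rfl] at this
  exact ⟨_, this⟩

/-- Three consecutive states of `n + 1` processes, of which those with index below `j` are running
and the others still alternate between `x` and `y`. -/
structure RunningState (t : (Fin (n + 1) → B) → B) (R : B → B → B → Prop) (x y : B) (j : ℕ)
    (a a' a'' : Fin (n + 1) → B) : Prop where
  step : ∀ k, k.val < j → a' k = t (mixBelow x k a)
  step' : ∀ k, k.val < j → a'' k = t (mixBelow y k a')
  idle : ∀ k, j ≤ k.val → a k = x ∧ a' k = y ∧ a'' k = x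
  rel : ∀ k, R y (a k) (a' k)
  walk : ∀ k, R (a k) (a' k) (a'' k)
  third : ∀ k, R x y (a k)

/-- One more process can be started, at the price of a Taylor identity for its coordinate. -/
theorem RunningState.exists_succ (ht : ∀ b, t (fun _ => b) = b)
    (hR : ∀ p q r : Fin (n + 1) → B, (∀ l, R (p l) (q l) (r l)) → R (t p) (t q) (t r))
    {z : Fin 2 → B} (hz : ∀ a b c : Fin 2, ¬ (a = b ∧ b = c) → R (z a) (z b) (z c))
    (i : Fin (n + 1)) {u v : Fin (n + 1) → Fin 2} (hu : u i = 1) (hv : v i = 0)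
    (huv : t (fun l => z (u l)) = t (fun l => z (v l))) {a₀ a₁ a₂ : Fin (n + 1) → B}
    (h : RunningState t R (z 0) (z 1) i a₀ a₁ a₂) :
    ∃ b b' b'', RunningState t R (z 0) (z 1) (i + 1) b b' b'' := by
  have hR1 : ∀ (c : B) (q r : Fin (n + 1) → B), (∀ l, R c (q l) (r l)) → R c (t q) (t r) :=
    fun c q r H => by have := hR (fun _ => c) q r H; rwa [ht] at this
  have hR2 : ∀ (c d : B) (r : Fin (n + 1) → B), (∀ l, R c d (r l)) → R c d (t r) :=
    fun c d r H => by have := hR (fun _ => c) (fun _ => d) r H; rwa [ht, ht] at this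
  have nae : ∀ a b : Fin 2, a ≠ b → ∀ c, R (z a) (z b) (z c) := fun a b hab c =>
    hz a b c fun H => hab H.1
  have nae' : ∀ a b : Fin 2, a ≠ b → ∀ c, R (z c) (z a) (z b) := fun a b hab c =>
    hz c a b fun H => hab H.2
  have xyx := nae 0 1 (by decide) 0
  have yxy := nae 1 0 (by decide) 1
  have yxx := nae 1 0 (by decide) 0
  have yyx := nae' 1 0 (by decide) 1
  have compl : ∀ a : Fin 2, 1 - a ≠ a := by decide
  set x := z 0 with hx
  set y := z 1 with hy
  set e := t (fun l => z (u l)) with he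
  set g := t (fun l => z (1 - u l)) with hg
  have yxz : ∀ c, R y x (z c) := nae 1 0 (by decide)
  have xyz : ∀ c, R x y (z c) := nae 0 1 (by decide)
  have yxg : R y x g := hR2 _ _ _ fun l => yxz _
  have yxe : R y x e := hR2 _ _ _ fun l => yxz _
  have xye : R x y e := hR2 _ _ _ fun l => xyz _
  have xyg : R x y g := hR2 _ _ _ fun l => xyz _
  have yge : R y g e := hR1 _ _ _ fun l => nae' _ _ (compl _) 1
  have xge : R x g e := hR1 _ _ _ fun l => nae' _ _ (compl _) 0
  obtain ⟨b₃, hb₃⟩ : ∃ b : Fin (n + 1) → B, b = fun k =>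
    if k < i then t (mixBelow x k a₂) else if k = i then g else y := ⟨_, rfl⟩
  obtain ⟨b₄, hb₄⟩ : ∃ b : Fin (n + 1) → B, b = fun k =>
    if k < i then t (mixBelow y k b₃) else if k = i then e else x := ⟨_, rfl⟩
  obtain ⟨b₅, hb₅⟩ : ∃ b : Fin (n + 1) → B, b = fun k =>
    if k ≤ i then t (mixBelow x k b₄) else y := ⟨_, rfl⟩
  obtain ⟨b₆, hb₆⟩ : ∃ b : Fin (n + 1) → B, b = fun k =>
    if k ≤ i then t (mixBelow y k b₅) else x := ⟨_, rfl⟩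
  have a₁lt : ∀ k, k < i → a₁ k = t (mixBelow x k a₀) := fun k hk => h.step k hk
  have a₂lt : ∀ k, k < i → a₂ k = t (mixBelow y k a₁) := fun k hk => h.step' k hk
  have idle : ∀ k, i ≤ k → a₀ k = x ∧ a₁ k = y ∧ a₂ k = x := fun k hk => h.idle k hk
  have b₃lt : ∀ k, k < i → b₃ k = t (mixBelow x k a₂) := fun k hk => by simp [hb₃, hk]
  have b₃i : b₃ i = g := by simp [hb₃]
  have b₃gt : ∀ k, i < k → b₃ k = y := fun k hk => by simp [hb₃, hk.not_gt, hk.ne']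
  have b₄lt : ∀ k, k < i → b₄ k = t (mixBelow y k b₃) := fun k hk => by simp [hb₄, hk]
  have b₄i : b₄ i = e := by simp [hb₄]
  have b₄gt : ∀ k, i < k → b₄ k = x := fun k hk => by simp [hb₄, hk.not_gt, hk.ne']
  have b₅le : ∀ k, k ≤ i → b₅ k = t (mixBelow x k b₄) := fun k hk => by simp [hb₅, hk]
  have b₅gt : ∀ k, i < k → b₅ k = y := fun k hk => by simp [hb₅, hk.not_ge]
  have b₆le : ∀ k, k ≤ i → b₆ k = t (mixBelow y k b₅) := fun k hk => by simp [hb₆, hk]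
  have b₆gt : ∀ k, i < k → b₆ k = x := fun k hk => by simp [hb₆, hk.not_ge]
  have mix₄ : ∀ l, l ≠ i → mixBelow x i b₄ l = x := fun l hl => by
    unfold mixBelow
    split_ifs with H
    · rfl
    · exact b₄gt l (lt_of_le_of_ne (not_lt.1 H) hl.symm)
  have mix₄i : mixBelow x i b₄ i = e := by simp [mixBelow, b₄i]
  have mix₅ : ∀ l, l ≠ i → mixBelow y i b₅ l = y := fun l hl => by
    unfold mixBelow
    split_ifs with H
    · rfl
    · exact b₅gt l (lt_of_le_of_ne (not_lt.1 H) hl.symm)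
  have mix₅i : mixBelow y i b₅ i = b₅ i := by simp [mixBelow]
  have ge5 : R g e (b₅ i) := by
    rw [b₅le i le_rfl]
    refine hR _ _ _ fun l => ?_
    by_cases hl : l = i
    · subst hl; rw [mix₄i, hu]; exact xye
    · rw [mix₄ l hl]; exact nae _ _ (compl _) 0
  have ye5 : R y e (b₅ i) := by
    rw [b₅le i le_rfl, huv]
    refine hR1 _ _ _ fun l => ?_
    by_cases hl : l = i
    · subst hl; rw [mix₄i, hv]; exact yxe
    · rw [mix₄ l hl]
      exact hz 1 (v l) 0 fun H => absurd (H.1.trans H.2) (by decide)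
  have e56 : R e (b₅ i) (b₆ i) := by
    rw [b₆le i le_rfl]
    nth_rewrite 1 [b₅le i le_rfl]
    refine hR _ _ _ fun l => ?_
    by_cases hl : l = i
    · subst hl; rw [mix₄i, mix₅i, hu]; exact ye5
    · rw [mix₄ l hl, mix₅ l hl]; exact nae' 0 1 (by decide) _
  have y12 : ∀ k, R y (a₁ k) (a₂ k) := fun k => by
    rcases lt_or_ge k i with hk | hk
    · rw [a₁lt k hk, a₂lt k hk]; exact rel_mixBelow_of_const ht hR k yxy h.rel
    · rw [(idle k hk).2.1, (idle k hk).2.2]; exact yyx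
  have y23 : ∀ k, R y (a₂ k) (b₃ k) := fun k => by
    rcases lt_trichotomy k i with hk | rfl | hk
    · rw [a₂lt k hk, b₃lt k hk]; exact rel_mixBelow_of_const ht hR k yyx y12
    · rw [(idle k le_rfl).2.2, b₃i]; exact yxg
    · rw [(idle k hk.le).2.2, b₃gt k hk]; exact yxy
  have r123 : ∀ k, R (a₁ k) (a₂ k) (b₃ k) := fun k => by
    rcases lt_trichotomy k i with hk | rfl | hk
    · rw [a₁lt k hk, a₂lt k hk, b₃lt k hk]; exact rel_mixBelow hR k xyx h.walk
    · rw [(idle k le_rfl).2.1, (idle k le_rfl).2.2, b₃i]; exact yxg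
    · rw [(idle k hk.le).2.1, (idle k hk.le).2.2, b₃gt k hk]; exact yxy
  have y34 : ∀ k, R y (b₃ k) (b₄ k) := fun k => by
    rcases lt_trichotomy k i with hk | rfl | hk
    · rw [b₃lt k hk, b₄lt k hk]; exact rel_mixBelow_of_const ht hR k yxy y23
    · rw [b₃i, b₄i]; exact yge
    · rw [b₃gt k hk, b₄gt k hk]; exact yyx
  have r234 : ∀ k, R (a₂ k) (b₃ k) (b₄ k) := fun k => by
    rcases lt_trichotomy k i with hk | rfl | hk
    · rw [a₂lt k hk, b₃lt k hk, b₄lt k hk]; exact rel_mixBelow hR k yxy r123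
    · rw [(idle k le_rfl).2.2, b₃i, b₄i]; exact xge
    · rw [(idle k hk.le).2.2, b₃gt k hk, b₄gt k hk]; exact xyx
  have y45 : ∀ k, R y (b₄ k) (b₅ k) := fun k => by
    rcases lt_trichotomy k i with hk | rfl | hk
    · rw [b₄lt k hk, b₅le k hk.le]; exact rel_mixBelow_of_const ht hR k yyx y34
    · rw [b₄i]; exact ye5
    · rw [b₄gt k hk, b₅gt k hk]; exact yxy
  have r345 : ∀ k, R (b₃ k) (b₄ k) (b₅ k) := fun k => by
    rcases lt_trichotomy k i with hk | rfl | hk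
    · rw [b₃lt k hk, b₄lt k hk, b₅le k hk.le]; exact rel_mixBelow hR k xyx r234
    · rw [b₃i, b₄i]; exact ge5
    · rw [b₃gt k hk, b₄gt k hk, b₅gt k hk]; exact yxy
  have r456 : ∀ k, R (b₄ k) (b₅ k) (b₆ k) := fun k => by
    rcases lt_trichotomy k i with hk | rfl | hk
    · rw [b₄lt k hk, b₅le k hk.le, b₆le k hk.le]; exact rel_mixBelow hR k yxy r345
    · rw [b₄i]; exact e56
    · rw [b₄gt k hk, b₅gt k hk, b₆gt k hk]; exact xyx
  have third_mix : ∀ (c : B) (k : Fin (n + 1)) (b : Fin (n + 1) → B), R x y c →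
      (∀ l, R x y (b l)) → R x y (t (mixBelow c k b)) := fun c k b hc hb =>
    hR2 _ _ _ fun l => by unfold mixBelow; split_ifs; exacts [hc, hb l]
  have w2 : ∀ k, R x y (a₂ k) := fun k => by
    rcases lt_or_ge k i with hk | hk
    · rw [a₂lt k hk]
      refine third_mix _ _ _ (xyz 1) fun l => ?_
      rcases lt_or_ge l i with hl | hl
      · rw [a₁lt l hl]; exact third_mix _ _ _ xyx h.third
      · rw [(idle l hl).2.1]; exact xyz 1
    · rw [(idle k hk).2.2]; exact xyx
  have w3 : ∀ k, R x y (b₃ k) := fun k => by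
    rcases lt_trichotomy k i with hk | rfl | hk
    · rw [b₃lt k hk]; exact third_mix _ _ _ xyx w2
    · rw [b₃i]; exact xyg
    · rw [b₃gt k hk]; exact xyz 1
  have w4 : ∀ k, R x y (b₄ k) := fun k => by
    rcases lt_trichotomy k i with hk | rfl | hk
    · rw [b₄lt k hk]; exact third_mix _ _ _ (xyz 1) w3
    · rw [b₄i]; exact xye
    · rw [b₄gt k hk]; exact xyx
  exact ⟨b₄, b₅, b₆,
    { step := fun k hk => b₅le k (Fin.le_def.2 (by omega))
      step' := fun k hk => b₆le k (Fin.le_def.2 (by omega))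
      idle := fun k hk =>
        have hk : i < k := Fin.lt_def.2 (by omega)
        ⟨b₄gt k hk, b₅gt k hk, b₆gt k hk⟩
      rel := y45
      walk := r456
      third := w4 }⟩

/-- A ternary relation invariant under a Taylor operation and containing all non-constant triples
from a two-element set contains a constant triple. -/
theorem exists_const_of_taylor (ht : ∀ b, t (fun _ => b) = b)
    (hR : ∀ p q r : Fin (n + 1) → B, (∀ l, R (p l) (q l) (r l)) → R (t p) (t q) (t r))
    {z : Fin 2 → B} (hz : ∀ a b c : Fin 2, ¬ (a = b ∧ b = c) → R (z a) (z b) (z c))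
    (hT : ∀ i, ∃ u v : Fin (n + 1) → Fin 2, u i = 1 ∧ v i = 0 ∧
      t (fun l => z (u l)) = t (fun l => z (v l))) :
    ∃ e, R e e e := by
  have run : ∀ j, j ≤ n + 1 → ∃ a a' a'', RunningState t R (z 0) (z 1) j a a' a'' := by
    intro j
    induction j with
    | zero =>
      intro _
      refine ⟨fun _ => z 0, fun _ => z 1, fun _ => z 0, ?_, ?_, ?_, ?_, ?_, ?_⟩
      · intro k hk; omega
      · intro k hk; omega
      · intro k _; exact ⟨rfl, rfl, rfl⟩
      · intro k; exact hz _ _ _ (by decide)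
      · intro k; exact hz _ _ _ (by decide)
      · intro k; exact hz _ _ _ (by decide)
    | succ j ih =>
      intro hj
      obtain ⟨a, a', a'', h⟩ := ih (by omega)
      obtain ⟨u, v, hu, hv, huv⟩ := hT ⟨j, by omega⟩
      exact RunningState.exists_succ ht hR hz ⟨j, by omega⟩ hu hv huv h
  obtain ⟨a, a', a'', h⟩ := run (n + 1) le_rfl
  have ha' : ∀ k, a' k = t (mixBelow (z 0) k a) := fun k => h.step k k.isLt
  have ha'' : ∀ k, a'' k = t (mixBelow (z 1) k a') := fun k => h.step' k k.isLt
  have third_mix : ∀ (c : B) (k : Fin (n + 1)) (b : Fin (n + 1) → B), R (z 0) (z 1) c →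
      (∀ l, R (z 0) (z 1) (b l)) → R (z 0) (z 1) (t (mixBelow c k b)) := fun c k b hc hb => by
    have := hR (fun _ => z 0) (fun _ => z 1) (mixBelow c k b) fun l => by
      unfold mixBelow; split_ifs; exacts [hc, hb l]
    rwa [ht, ht] at this
  have hy' : ∀ k, R (z 1) (a' k) (a'' k) := fun k => by
    rw [ha', ha'']
    exact rel_mixBelow_of_const ht hR k (hz _ _ _ (by decide)) h.rel
  refine exists_const_of_triangular ht hR ha' ha'' h.walk ?_ ?_
  · rw [ha'']
    refine third_mix _ _ _ (hz _ _ _ (by decide)) fun l => ?_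
    rw [ha']
    exact third_mix _ _ _ (hz _ _ _ (by decide)) h.third
  · have e : a'' 0 = t a' := by
      rw [ha'']; congr 1
    have := hR (fun _ => z 1) a' a'' hy'
    rwa [ht, ← e] at this

end Walks

/-- The triples of binary operations obtained from the idempotent 6-ary members of `C` by the three
identifications of variables that occur in Olšák's identities. -/
def OlsakRel {A : Type*} (C : Set (Ops A)) (h₁ h₂ h₃ : (Fin 2 → A) → A) : Prop :=
  ∃ f : (Fin 6 → A) → A, (⟨5, f⟩ : Ops A) ∈ C ∧ (∀ a : A, f (fun _ => a) = a) ∧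
    ∀ w : Fin 2 → A, h₁ w = f ![w 0, w 1, w 1, w 1, w 0, w 0] ∧
      h₂ w = f ![w 1, w 0, w 1, w 0, w 1, w 0] ∧ h₃ w = f ![w 1, w 1, w 0, w 0, w 0, w 1]

theorem OlsakRel.map {A : Type*} {C : Set (Ops A)} (hC : IsClone C) {n : ℕ}
    {t : (Fin (n + 1) → A) → A} (htC : (⟨n, t⟩ : Ops A) ∈ C) (ht : ∀ a, t (fun _ => a) = a)
    (p q r : Fin (n + 1) → (Fin 2 → A) → A) (h : ∀ l, OlsakRel C (p l) (q l) (r l)) :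
    OlsakRel C (fun w => t fun l => p l w) (fun w => t fun l => q l w)
      (fun w => t fun l => r l w) := by
  choose f hf hid hval using h
  refine ⟨fun a => t fun l => f l a, hC.2 n 5 t f htC hf, fun a => ?_, fun w => ⟨?_, ?_, ?_⟩⟩
  · simp only [hid, ht]
  · simp only [(hval _ w).1]
  · simp only [(hval _ w).2.1]
  · simp only [(hval _ w).2.2]

theorem olsakRel_proj {A : Type*} {C : Set (Ops A)} (hC : IsClone C) (a b c : Fin 2)
    (h : ¬ (a = b ∧ b = c)) :
    OlsakRel C (fun w => w a) (fun w => w b) (fun w => w c) := by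
  have key : ∃ i : Fin 6, ∀ w : Fin 2 → A, w a = ![w 0, w 1, w 1, w 1, w 0, w 0] i ∧
      w b = ![w 1, w 0, w 1, w 0, w 1, w 0] i ∧ w c = ![w 1, w 1, w 0, w 0, w 0, w 1] i := by
    fin_cases a <;> fin_cases b <;> fin_cases c <;> first
      | exact absurd ⟨rfl, rfl⟩ h
      | exact ⟨0, fun w => ⟨rfl, rfl, rfl⟩⟩
      | exact ⟨1, fun w => ⟨rfl, rfl, rfl⟩⟩
      | exact ⟨2, fun w => ⟨rfl, rfl, rfl⟩⟩
      | exact ⟨3, fun w => ⟨rfl, rfl, rfl⟩⟩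
      | exact ⟨4, fun w => ⟨rfl, rfl, rfl⟩⟩
      | exact ⟨5, fun w => ⟨rfl, rfl, rfl⟩⟩
  obtain ⟨i, hi⟩ := key
  exact ⟨fun x => x i, hC.1 5 i, fun _ => rfl, hi⟩

theorem isTaylor_of_olsak {A : Type*} {f : (Fin 6 → A) → A} (hid : ∀ a : A, f (fun _ => a) = a)
    (h : ∀ x y : A, f ![x, y, y, y, x, x] = f ![y, x, y, x, y, x] ∧
      f ![y, x, y, x, y, x] = f ![y, y, x, x, x, y]) : IsTaylor (⟨5, f⟩ : Ops A) := by
  have apply_vec : ∀ (z : Fin 2 → A) (a b c d e g : Fin 2),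
      f (fun j : Fin 6 => z (![a, b, c, d, e, g] j)) = f ![z a, z b, z c, z d, z e, z g] := by
    intro z a b c d e g
    congr 1
    funext j
    fin_cases j <;> rfl
  have h12 : ∀ z : Fin 2 → A, f (fun j : Fin 6 => z ((![0, 1, 1, 1, 0, 0] : Fin 6 → Fin 2) j)) =
      f (fun j : Fin 6 => z ((![1, 0, 1, 0, 1, 0] : Fin 6 → Fin 2) j)) := fun z => by
    rw [apply_vec, apply_vec]; exact (h _ _).1
  have h23 : ∀ z : Fin 2 → A, f (fun j : Fin 6 => z ((![1, 0, 1, 0, 1, 0] : Fin 6 → Fin 2) j)) =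
      f (fun j : Fin 6 => z ((![1, 1, 0, 0, 0, 1] : Fin 6 → Fin 2) j)) := fun z => by
    rw [apply_vec, apply_vec]; exact (h _ _).2
  have cover : ∀ i : Fin 6,
      (![0, 1, 1, 1, 0, 0] : Fin 6 → Fin 2) i ≠ (![1, 0, 1, 0, 1, 0] : Fin 6 → Fin 2) i ∨
      (![1, 0, 1, 0, 1, 0] : Fin 6 → Fin 2) i ≠ (![1, 1, 0, 0, 0, 1] : Fin 6 → Fin 2) i := by
    decide
  refine ⟨hid, fun i => ?_⟩
  rcases cover i with hi | hi
  exacts [⟨_, _, hi, h12⟩, ⟨_, _, hi, h23⟩]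

/-- **Olšák's Theorem.**  A clone `C` on an arbitrary set `A` contains a Taylor
operation if and only if `C` contains a 6-ary idempotent operation `f` satisfying
`f(x,y,y,y,x,x) = f(y,x,y,x,y,x) = f(y,y,x,x,x,y)` for all `x, y`. -/
theorem olsak_taylor {A : Type u} (C : Set (Ops A)) (hC : IsClone C) :
    (∃ f : Ops A, f ∈ C ∧ IsTaylor f) ↔
      ∃ f : (Fin 6 → A) → A, (⟨5, f⟩ : Ops A) ∈ C ∧
        (∀ a : A, f (fun _ => a) = a) ∧
        ∀ x y : A, f ![x, y, y, y, x, x] = f ![y, x, y, x, y, x] ∧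
          f ![y, x, y, x, y, x] = f ![y, y, x, x, x, y] := by
  constructor
  · rintro ⟨⟨n, t⟩, htC, ht, hT⟩
    obtain ⟨e, f, hfC, hid, hf⟩ := exists_const_of_taylor
      (t := fun (p : Fin (n + 1) → (Fin 2 → A) → A) w => t fun l => p l w) (R := OlsakRel C)
      (fun b => funext fun w => ht (b w)) (OlsakRel.map hC htC ht)
      (z := fun i w => w i) (olsakRel_proj hC) (fun i => by
        obtain ⟨u, v, hne, huv⟩ := hT i
        have orient : (u i = 1 ∧ v i = 0) ∨ (v i = 1 ∧ u i = 0) := by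
          generalize u i = a at hne
          generalize v i = b at hne
          revert a b
          decide
        rcases orient with ⟨h1, h0⟩ | ⟨h1, h0⟩
        · exact ⟨u, v, h1, h0, funext huv⟩
        · exact ⟨v, u, h1, h0, funext fun w => (huv w).symm⟩)
    refine ⟨f, hfC, hid, fun x y => ?_⟩
    obtain ⟨h₁, h₂, h₃⟩ := hf ![x, y]
    exact ⟨h₁.symm.trans h₂, h₂.symm.trans h₃⟩
  · rintro ⟨f, hfC, hid, h⟩
    exact ⟨⟨5, f⟩, hfC, isTaylor_of_olsak hid h⟩
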